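/- For every ε>0 there exist β,γ∈I_α such that d_H(β,γ) < ε and d_α(β,γ) > 1/ε. Consequently the topology generated by d_α on I_α is strictly stronger than the subspace topology generated by d_H (equivalently, by d_H'). -/

import Mathlib

/-!
The metrics compare as `d_H ≤ d_H' ≤ d_α`, which gives continuity of both identity maps. The second
inequality is immediate. For the first, let a correspondence have Hausdorff distortion `x` and let
`s ∈ C_β`. The point `s` splits the matched blocks into those left and those right of it; let
`y ∈ C_γ` split the matched blocks of `γ` at the same index. Each of `s`, `y` equals the matched
mass to its left up to an error between `0` and the total unmatched mass of its partition, so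
`|s - y| ≤ x` (`exists_close`).

The inverses fail to be continuous at the empty partition. Laying blocks of masses
`(D / (i + K + 1)) ^ (1 / α)`, `i = 0, 1, …`, from left to right gives a partition with diversity
`0` before its right end and total diversity `Γ(1 - α) D`, whatever `K` is, while its length is the
tail of a convergent series and hence tends to `0` as `K → ∞` (`exists_short_diverse`). Both `d_H`
and `d_H'` to the empty partition are at most the length, but `d_α` is at least the total diversity.
-/

open MeasureTheory Filter Topology Set

/-- An interval partition of `[0, L]`: a set of disjoint open subintervals whose
complement in `[0, L]` is Lebesgue-null. A block is encoded by its endpoint pair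
`(a, b)` with `a < b`, representing the open interval `(a, b)`. -/
structure IntervalPartition where
  length : ℝ
  length_nonneg : 0 ≤ length
  blocks : Set (ℝ × ℝ)
  blocks_lt : ∀ p ∈ blocks, p.1 < p.2
  blocks_sub : ∀ p ∈ blocks, 0 ≤ p.1 ∧ p.2 ≤ length
  blocks_disjoint : ∀ p ∈ blocks, ∀ q ∈ blocks, p ≠ q →
    Set.Ioo p.1 p.2 ∩ Set.Ioo q.1 q.2 = ∅
  compl_null : volume (Set.Icc 0 length \ ⋃ p ∈ blocks, Set.Ioo p.1 p.2) = 0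

namespace IntervalPartition

/-- The mass (Lebesgue measure) of a block `(a, b)`. -/
def mass (p : ℝ × ℝ) : ℝ := p.2 - p.1

/-- The complement `C_β = [0, ‖β‖] \ ⋃_{U ∈ β} U`. -/
def cset (β : IntervalPartition) : Set ℝ :=
  Set.Icc 0 β.length \ ⋃ p ∈ β.blocks, Set.Ioo p.1 p.2

/-- A correspondence between `β` and `γ`: a finite sequence of pairs of blocks,
strictly increasing in the left-to-right order in each coordinate. -/
def IsCorrespondence (β γ : IntervalPartition) (n : ℕ)
    (c : Fin n → (ℝ × ℝ) × (ℝ × ℝ)) : Prop :=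
  (∀ j, (c j).1 ∈ β.blocks ∧ (c j).2 ∈ γ.blocks) ∧
  (∀ j k : Fin n, j < k → (c j).1.2 ≤ (c k).1.1 ∧ (c j).2.2 ≤ (c k).2.1)

/-- The Hausdorff distortion of a correspondence: the maximum of quantities
(i) and (ii) of the paper. -/
noncomputable def hausDistortion (β γ : IntervalPartition) (n : ℕ)
    (c : Fin n → (ℝ × ℝ) × (ℝ × ℝ)) : ℝ :=
  max ((∑ j : Fin n, |mass (c j).1 - mass (c j).2|) + β.length - ∑ j : Fin n, mass (c j).1)
      ((∑ j : Fin n, |mass (c j).1 - mass (c j).2|) + γ.length - ∑ j : Fin n, mass (c j).2)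

/-- The metric `d_H'`: infimum of the Hausdorff distortion over all correspondences. -/
noncomputable def dHp (β γ : IntervalPartition) : ℝ :=
  sInf {x | ∃ n, ∃ c : Fin n → (ℝ × ℝ) × (ℝ × ℝ),
    IsCorrespondence β γ n c ∧ x = hausDistortion β γ n c}

/-- The metric `d_H`: the Hausdorff distance between the complements. -/
noncomputable def dH (β γ : IntervalPartition) : ℝ :=
  Metric.hausdorffDist β.cset γ.cset

/-- The number of blocks of mass `> h` ending at or before `t`. -/
noncomputable def divCount (β : IntervalPartition) (t h : ℝ) : ℕ :=
  Set.ncard {p : ℝ × ℝ | p ∈ β.blocks ∧ h < p.2 - p.1 ∧ p.2 ≤ t}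

/-- `β` has `a`-diversity `d` at `t`:
`Γ(1-a) · lim_{h↓0} h^a · #{(x,y) ∈ β : y - x > h, y ≤ t} = d`. -/
def HasDiversity (a : ℝ) (β : IntervalPartition) (t d : ℝ) : Prop :=
  Tendsto (fun h : ℝ => Real.Gamma (1 - a) * h ^ a * (divCount β t h : ℝ))
    (𝓝[>] 0) (𝓝 d)

/-- The `a`-diversity property: the diversity limit exists at every `t ∈ [0, ‖β‖]`. -/
def HasDiversityProp (a : ℝ) (β : IntervalPartition) : Prop :=
  ∀ t ∈ Set.Icc 0 β.length, ∃ d, HasDiversity a β t d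

/-- The diversity function `𝒟_β(t)` (the value of the limit, when it exists). -/
noncomputable def diversity (a : ℝ) (β : IntervalPartition) (t : ℝ) : ℝ :=
  limUnder (𝓝[>] (0:ℝ)) (fun h : ℝ => Real.Gamma (1 - a) * h ^ a * (divCount β t h : ℝ))

/-- The total diversity `𝒟_β(∞) = 𝒟_β(‖β‖)`. -/
noncomputable def totalDiversity (a : ℝ) (β : IntervalPartition) : ℝ :=
  diversity a β β.length

/-- The diversity `𝒟_β(U)` of a block `U`, evaluated at its midpoint. -/
noncomputable def blockDiversity (a : ℝ) (β : IntervalPartition) (p : ℝ × ℝ) : ℝ :=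
  diversity a β ((p.1 + p.2) / 2)

/-- The `a`-distortion of a correspondence: the maximum of quantities (i)-(iv). -/
noncomputable def alphaDistortion (a : ℝ) (β γ : IntervalPartition) (n : ℕ)
    (c : Fin n → (ℝ × ℝ) × (ℝ × ℝ)) : ℝ :=
  max (hausDistortion β γ n c)
    (max (⨆ j : Fin n, |blockDiversity a β (c j).1 - blockDiversity a γ (c j).2|)
         |totalDiversity a β - totalDiversity a γ|)

/-- The metric `d_α`: infimum of the `a`-distortion over all correspondences. -/
noncomputable def dA (a : ℝ) (β γ : IntervalPartition) : ℝ :=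
  sInf {x | ∃ n, ∃ c : Fin n → (ℝ × ℝ) × (ℝ × ℝ),
    IsCorrespondence β γ n c ∧ x = alphaDistortion a β γ n c}

end IntervalPartition

/-- A point of the space `J`: an interval partition `η` together with an increasing,
right-continuous function `f` that is constant on every block of `η`, on `[‖η‖, ∞)`,
and (as `f` is defined on `[0, ∞]`) on `(-∞, 0]`. -/
structure JPoint where
  part : IntervalPartition
  f : ℝ → ℝ
  f_nonneg : ∀ t, 0 ≤ f t
  f_mono : Monotone f
  f_rightCont : ∀ t, ContinuousWithinAt f (Set.Ici t) t
  f_const_block : ∀ p ∈ part.blocks, ∀ s ∈ Set.Ioo p.1 p.2, ∀ t ∈ Set.Ioo p.1 p.2, f s = f t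
  f_const_top : ∀ t, part.length ≤ t → f t = f part.length
  f_const_neg : ∀ t, t ≤ (0:ℝ) → f t = f 0

/-- The distortion of a correspondence between two points of `J`: as the
`a`-distortion, but with `f`, `g` in place of the diversity functions. -/
noncomputable def jDistortion (x y : JPoint) (n : ℕ)
    (c : Fin n → (ℝ × ℝ) × (ℝ × ℝ)) : ℝ :=
  max (IntervalPartition.hausDistortion x.part y.part n c)
    (max (⨆ j : Fin n, |x.f (((c j).1.1 + (c j).1.2) / 2) - y.f (((c j).2.1 + (c j).2.2) / 2)|)
         |x.f x.part.length - y.f y.part.length|)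

/-- The metric `d_J` on `J`. -/
noncomputable def dJ (x y : JPoint) : ℝ :=
  sInf {r | ∃ n, ∃ c : Fin n → (ℝ × ℝ) × (ℝ × ℝ),
    IntervalPartition.IsCorrespondence x.part y.part n c ∧ r = jDistortion x y n c}

namespace IntervalPartition

/-! ### Comparison of the metrics -/

/-- Blocks in increasing order that lie in `[u, v]` have total mass at most `v - u`. -/
lemma sum_mass_le {n : ℕ} (p : Fin n → ℝ × ℝ) (hp : ∀ j k, j < k → (p j).2 ≤ (p k).1)
    (u : ℝ) (F : Finset (Fin n)) : ∀ v : ℝ, u ≤ v →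
      (∀ i ∈ F, u ≤ (p i).1 ∧ (p i).2 ≤ v) → ∑ i ∈ F, mass (p i) ≤ v - u := by
  induction F using Finset.induction_on_max with
  | empty => intro v huv _; simpa using huv
  | insert a s hlt ih =>
    intro v huv h
    have ha : a ∉ s := fun h' => lt_irrefl _ (hlt a h')
    rw [Finset.sum_insert ha]
    have h1 := h a (Finset.mem_insert_self _ _)
    have h2 := ih (p a).1 h1.1 fun i hi =>
      ⟨(h i (Finset.mem_insert_of_mem hi)).1, hp i a (hlt i hi)⟩
    unfold mass at *
    linarith

/-- The position of a point `s` that splits the ordered blocks `p i ⊆ [0, L]` into `F` (left) and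
its complement (right) is the mass of `F`, up to the mass not covered by the blocks. -/
lemma split_bounds {n : ℕ} (p : Fin n → ℝ × ℝ) (hp : ∀ j k, j < k → (p j).2 ≤ (p k).1)
    (L s : ℝ) (hs : s ∈ Set.Icc 0 L) (F : Finset (Fin n))
    (h0 : ∀ i, 0 ≤ (p i).1 ∧ (p i).2 ≤ L)
    (h1 : ∀ i ∈ F, (p i).2 ≤ s) (h2 : ∀ i ∉ F, s ≤ (p i).1) :
    ∑ i ∈ F, mass (p i) ≤ s ∧ s - ∑ i ∈ F, mass (p i) ≤ L - ∑ i, mass (p i) := by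
  have e1 := sum_mass_le p hp 0 F s hs.1 fun i hi => ⟨(h0 i).1, h1 i hi⟩
  have e2 := sum_mass_le p hp s Fᶜ L hs.2 fun i hi =>
    ⟨h2 i (Finset.mem_compl.1 hi), (h0 i).2⟩
  have e3 := Finset.sum_add_sum_compl F fun i => mass (p i)
  constructor <;> linarith

lemma zero_mem_cset (β : IntervalPartition) : (0 : ℝ) ∈ β.cset := by
  refine ⟨⟨le_rfl, β.length_nonneg⟩, ?_⟩
  simp only [Set.mem_iUnion, not_exists]
  intro p hp h
  exact absurd h.1 (not_lt.2 (β.blocks_sub p hp).1)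

lemma right_mem_cset (β : IntervalPartition) (p : ℝ × ℝ) (hp : p ∈ β.blocks) :
    p.2 ∈ β.cset := by
  have hlt := β.blocks_lt p hp
  have hsub := β.blocks_sub p hp
  refine ⟨⟨by linarith, hsub.2⟩, ?_⟩
  simp only [Set.mem_iUnion, not_exists]
  intro q hq h
  have hne : p ≠ q := by
    rintro rfl
    exact lt_irrefl _ h.2
  obtain ⟨y, hy1, hy2⟩ := exists_between (max_lt hlt h.1)
  have : y ∈ Set.Ioo p.1 p.2 ∩ Set.Ioo q.1 q.2 :=
    ⟨⟨(le_max_left _ _).trans_lt hy1, hy2⟩, ⟨(le_max_right _ _).trans_lt hy1, hy2.trans h.2⟩⟩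
  rw [β.blocks_disjoint p hp q hq hne] at this
  exact this

lemma IsCorrespondence.swap {β γ : IntervalPartition} {n : ℕ} {c : Fin n → (ℝ × ℝ) × (ℝ × ℝ)}
    (h : IsCorrespondence β γ n c) : IsCorrespondence γ β n (fun j => (c j).swap) :=
  ⟨fun j => (h.1 j).symm, fun j k hjk => (h.2 j k hjk).symm⟩

lemma hausDistortion_swap (β γ : IntervalPartition) (n : ℕ) (c : Fin n → (ℝ × ℝ) × (ℝ × ℝ)) :
    hausDistortion γ β n (fun j => (c j).swap) = hausDistortion β γ n c := by
  unfold hausDistortion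
  rw [max_comm]
  simp only [Prod.fst_swap, Prod.snd_swap, abs_sub_comm]

lemma hausDistortion_nonneg {β γ : IntervalPartition} {n : ℕ} {c : Fin n → (ℝ × ℝ) × (ℝ × ℝ)}
    (h : IsCorrespondence β γ n c) : 0 ≤ hausDistortion β γ n c := by
  have h1 := sum_mass_le (fun j => (c j).1) (fun j k hjk => (h.2 j k hjk).1) 0 Finset.univ
    β.length β.length_nonneg fun i _ => β.blocks_sub _ (h.1 i).1
  have h2 : 0 ≤ ∑ j : Fin n, |mass (c j).1 - mass (c j).2| :=
    Finset.sum_nonneg fun _ _ => abs_nonneg _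
  exact le_max_of_le_left (by linarith)

/-- Every point of `C_β` is within the Hausdorff distortion of a point of `C_γ`. -/
lemma exists_close {β γ : IntervalPartition} {n : ℕ} {c : Fin n → (ℝ × ℝ) × (ℝ × ℝ)}
    (h : IsCorrespondence β γ n c) (s : ℝ) (hs : s ∈ β.cset) :
    ∃ y ∈ γ.cset, dist s y ≤ hausDistortion β γ n c := by
  classical
  set F : Finset (Fin n) := Finset.univ.filter fun i => (c i).1.2 ≤ s with hF
  have hF1 : ∀ i ∈ F, (c i).1.2 ≤ s := fun i hi => (Finset.mem_filter.1 hi).2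
  have hF2 : ∀ i ∉ F, s ≤ (c i).1.1 := by
    intro i hi
    have hi' : s < (c i).1.2 := by simpa [hF] using hi
    by_contra hcon
    exact hs.2 (Set.mem_biUnion (h.1 i).1 ⟨not_le.1 hcon, hi'⟩)
  -- `y` is the right end of the last matched block of `γ` with index in `F`, or `0` if `F` is empty.
  obtain ⟨y, hy, hy1, hy2⟩ : ∃ y ∈ γ.cset, (∀ i ∈ F, (c i).2.2 ≤ y) ∧
      (∀ i ∉ F, y ≤ (c i).2.1) := by
    rcases F.eq_empty_or_nonempty with hE | hE
    · refine ⟨0, zero_mem_cset γ, ?_, fun i _ => (γ.blocks_sub _ (h.1 i).2).1⟩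
      simp [hE]
    · refine ⟨(c (F.max' hE)).2.2, right_mem_cset γ _ (h.1 _).2, ?_, ?_⟩
      · intro i hi
        rcases (F.le_max' i hi).eq_or_lt with e | e
        · exact le_of_eq (congrArg (fun k => (c k).2.2) e)
        · exact (h.2 _ _ e).2.trans (γ.blocks_lt _ (h.1 _).2).le
      · intro i hi
        rcases lt_trichotomy i (F.max' hE) with e | e | e
        · have h1 := (h.2 _ _ e).1
          have h2 := hF1 _ (F.max'_mem hE)
          have h3 := β.blocks_lt _ (h.1 (F.max' hE)).1
          exact absurd (Finset.mem_filter.2 ⟨Finset.mem_univ i, by linarith⟩) hi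
        · exact absurd (e ▸ F.max'_mem hE) hi
        · exact (h.2 _ _ e).2
  refine ⟨y, hy, ?_⟩
  obtain ⟨b1, b2⟩ := split_bounds (fun j => (c j).1) (fun j k hjk => (h.2 j k hjk).1) β.length s
    hs.1 F (fun i => β.blocks_sub _ (h.1 i).1) hF1 hF2
  obtain ⟨g1, g2⟩ := split_bounds (fun j => (c j).2) (fun j k hjk => (h.2 j k hjk).2) γ.length y
    hy.1 F (fun i => γ.blocks_sub _ (h.1 i).2) hy1 hy2
  have hA : |∑ i ∈ F, mass (c i).1 - ∑ i ∈ F, mass (c i).2| ≤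
      ∑ i, |mass (c i).1 - mass (c i).2| := by
    rw [← Finset.sum_sub_distrib]
    exact (Finset.abs_sum_le_sum_abs _ _).trans
      (Finset.sum_le_sum_of_subset_of_nonneg (Finset.subset_univ _) fun _ _ _ => abs_nonneg _)
  obtain ⟨hA1, hA2⟩ := abs_le.1 hA
  have m1 := le_max_left
    ((∑ j : Fin n, |mass (c j).1 - mass (c j).2|) + β.length - ∑ j : Fin n, mass (c j).1)
    ((∑ j : Fin n, |mass (c j).1 - mass (c j).2|) + γ.length - ∑ j : Fin n, mass (c j).2)
  have m2 := le_max_right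
    ((∑ j : Fin n, |mass (c j).1 - mass (c j).2|) + β.length - ∑ j : Fin n, mass (c j).1)
    ((∑ j : Fin n, |mass (c j).1 - mass (c j).2|) + γ.length - ∑ j : Fin n, mass (c j).2)
  rw [Real.dist_eq, abs_le]
  unfold hausDistortion
  constructor <;> linarith

lemma dH_le_hausDistortion {β γ : IntervalPartition} {n : ℕ} {c : Fin n → (ℝ × ℝ) × (ℝ × ℝ)}
    (h : IsCorrespondence β γ n c) : dH β γ ≤ hausDistortion β γ n c := by
  refine Metric.hausdorffDist_le_of_mem_dist (hausDistortion_nonneg h) (exists_close h) ?_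
  intro s hs
  rw [← hausDistortion_swap]
  exact exists_close h.swap s hs

lemma isCorrespondence_zero (β γ : IntervalPartition) (c : Fin 0 → (ℝ × ℝ) × (ℝ × ℝ)) :
    IsCorrespondence β γ 0 c := ⟨fun j => j.elim0, fun j => j.elim0⟩

lemma dH_le_dHp (β γ : IntervalPartition) : dH β γ ≤ dHp β γ := by
  refine le_csInf ⟨_, 0, Fin.elim0, isCorrespondence_zero β γ _, rfl⟩ ?_
  rintro x ⟨n, c, h, rfl⟩
  exact dH_le_hausDistortion h

lemma dHp_le_hausDistortion {β γ : IntervalPartition} {n : ℕ} {c : Fin n → (ℝ × ℝ) × (ℝ × ℝ)}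
    (h : IsCorrespondence β γ n c) : dHp β γ ≤ hausDistortion β γ n c := by
  refine csInf_le ⟨0, ?_⟩ ⟨n, c, h, rfl⟩
  rintro x ⟨n, c, h, rfl⟩
  exact hausDistortion_nonneg h

lemma dHp_le_dA (a : ℝ) (β γ : IntervalPartition) : dHp β γ ≤ dA a β γ := by
  refine le_csInf ⟨_, 0, Fin.elim0, isCorrespondence_zero β γ _, rfl⟩ ?_
  rintro x ⟨n, c, h, rfl⟩
  exact (dHp_le_hausDistortion h).trans (le_max_left _ _)

lemma abs_totalDiversity_sub_le_dA (a : ℝ) (β γ : IntervalPartition) :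
    |totalDiversity a β - totalDiversity a γ| ≤ dA a β γ := by
  refine le_csInf ⟨_, 0, Fin.elim0, isCorrespondence_zero β γ _, rfl⟩ ?_
  rintro x ⟨n, c, h, rfl⟩
  exact (le_max_right _ _).trans (le_max_right _ _)

/-! ### The empty partition -/

/-- The interval partition of `[0, 0]`, which has no blocks. -/
def empty : IntervalPartition where
  length := 0
  length_nonneg := le_rfl
  blocks := ∅
  blocks_lt := by simp
  blocks_sub := by simp
  blocks_disjoint := by simp
  compl_null := by simp

lemma hasDiversity_empty (a t : ℝ) : HasDiversity a empty t 0 := by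
  have : ∀ h, divCount empty t h = 0 := by
    intro h
    simp [divCount, empty]
  simp [HasDiversity, this]

lemma totalDiversity_eq {a d : ℝ} {β : IntervalPartition} (h : HasDiversity a β β.length d) :
    totalDiversity a β = d := h.limUnder_eq

lemma dHp_empty_le (γ : IntervalPartition) : dHp empty γ ≤ γ.length := by
  refine (dHp_le_hausDistortion (isCorrespondence_zero empty γ Fin.elim0)).trans ?_
  simp [hausDistortion, empty, γ.length_nonneg]

/-! ### Partitions with blocks laid out from left to right -/

lemma tendsto_rpow_zero_right {a : ℝ} (ha : 0 < a) :
    Tendsto (fun h : ℝ => h ^ a) (𝓝[>] 0) (𝓝 0) := by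
  have h : Tendsto (fun h : ℝ => h ^ a) (𝓝 0) (𝓝 ((0 : ℝ) ^ a)) :=
    (Real.continuous_rpow_const ha.le).tendsto 0
  rw [Real.zero_rpow ha.ne'] at h
  exact h.mono_left nhdsWithin_le_nhds

section Seq

variable (m : ℕ → ℝ)

/-- The left endpoint of block `i` when blocks of masses `m 0, m 1, …` are laid from left to
right. -/
def leftEnd (i : ℕ) : ℝ := ∑ j ∈ Finset.range i, m j

lemma leftEnd_succ (i : ℕ) : leftEnd m (i + 1) = leftEnd m i + m i :=
  Finset.sum_range_succ _ _

variable {m}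

lemma leftEnd_strictMono (hm : ∀ i, 0 < m i) : StrictMono (leftEnd m) :=
  strictMono_nat_of_lt_succ fun i => by
    rw [leftEnd_succ]
    linarith [hm i]

lemma leftEnd_le (hm : ∀ i, 0 < m i) (hs : Summable m) (i : ℕ) : leftEnd m i ≤ ∑' j, m j :=
  hs.sum_le_tsum _ fun j _ => (hm j).le

lemma leftEnd_tendsto (hs : Summable m) : Tendsto (leftEnd m) atTop (𝓝 (∑' j, m j)) :=
  hs.hasSum.tendsto_sum_nat

/-- The interval partition whose blocks, from left to right, have masses `m 0, m 1, …`. -/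
noncomputable def ofSeq (m : ℕ → ℝ) (hm : ∀ i, 0 < m i) (hs : Summable m) : IntervalPartition where
  length := ∑' j, m j
  length_nonneg := tsum_nonneg fun j => (hm j).le
  blocks := Set.range fun i => (leftEnd m i, leftEnd m (i + 1))
  blocks_lt := by
    rintro _ ⟨i, rfl⟩
    exact leftEnd_strictMono hm (Nat.lt_succ_self i)
  blocks_sub := by
    rintro _ ⟨i, rfl⟩
    refine ⟨?_, leftEnd_le hm hs _⟩
    exact Finset.sum_nonneg (s := Finset.range i) fun j _ => (hm j).le
  blocks_disjoint := by
    have key : ∀ i j, i < j → ∀ x, x < leftEnd m (i + 1) → leftEnd m j < x → False := by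
      intro i j hij x h1 h2
      have := (leftEnd_strictMono hm).monotone (Nat.succ_le_of_lt hij)
      exact absurd (h2.trans h1) (not_lt.2 this)
    rintro _ ⟨i, rfl⟩ _ ⟨j, rfl⟩ hne
    refine Set.eq_empty_of_forall_notMem ?_
    rintro x ⟨hx1, hx2⟩
    rcases lt_trichotomy i j with h | h | h
    · exact key i j h x hx1.2 hx2.1
    · exact hne (by rw [h])
    · exact key j i h x hx2.2 hx1.1
  compl_null := by
    refine measure_mono_null (t := Set.range (leftEnd m) ∪ {∑' j, m j}) ?_
      (((Set.countable_range _).union (Set.countable_singleton _)).measure_zero _)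
    rintro x ⟨⟨hx0, hxL⟩, hx⟩
    rcases hxL.eq_or_lt with h | h
    · exact Or.inr h
    left
    have hex : ∃ i, x < leftEnd m i := ((leftEnd_tendsto hs).eventually (lt_mem_nhds h)).exists
    classical
    have hpos : Nat.find hex ≠ 0 := by
      intro h0
      have := Nat.find_spec hex
      rw [h0] at this
      simp [leftEnd] at this
      linarith
    obtain ⟨i, hi⟩ := Nat.exists_eq_succ_of_ne_zero hpos
    have h1 : x < leftEnd m (i + 1) := by
      have := Nat.find_spec hex
      rwa [hi] at this
    have h2 : leftEnd m i ≤ x := not_lt.1 (Nat.find_min hex (by omega))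
    rcases h2.eq_or_lt with e | e
    · exact ⟨i, e⟩
    · refine absurd ?_ hx
      simp only [Set.mem_iUnion]
      exact ⟨(leftEnd m i, leftEnd m (i + 1)), ⟨i, rfl⟩, e, h1⟩

lemma divCount_ofSeq (hm : ∀ i, 0 < m i) (hs : Summable m) (t h : ℝ) :
    divCount (ofSeq m hm hs) t h = Set.ncard {i : ℕ | h < m i ∧ leftEnd m (i + 1) ≤ t} := by
  have hinj : Function.Injective fun i : ℕ => (leftEnd m i, leftEnd m (i + 1)) := fun i j hij =>
    (leftEnd_strictMono hm).injective (Prod.ext_iff.1 hij).1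
  rw [← Set.ncard_image_of_injective _ hinj, divCount]
  congr 1
  ext p
  constructor
  · rintro ⟨⟨i, rfl⟩, h1, h2⟩
    refine ⟨i, ⟨?_, h2⟩, rfl⟩
    simpa [leftEnd_succ] using h1
  · rintro ⟨i, ⟨h1, h2⟩, rfl⟩
    refine ⟨⟨i, rfl⟩, ?_, h2⟩
    simpa [leftEnd_succ] using h1

/-- Before the right end of `ofSeq` there are only finitely many blocks, hence no diversity. -/
lemma hasDiversity_ofSeq_of_lt {a : ℝ} (ha : 0 < a) (hm : ∀ i, 0 < m i) (hs : Summable m)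
    {t : ℝ} (ht : t < ∑' j, m j) : HasDiversity a (ofSeq m hm hs) t 0 := by
  obtain ⟨N, hN⟩ := ((leftEnd_tendsto hs).eventually (lt_mem_nhds ht)).exists
  have hbd : ∀ h, (divCount (ofSeq m hm hs) t h : ℝ) ≤ N := by
    intro h
    rw [divCount_ofSeq]
    have hsub : {i : ℕ | h < m i ∧ leftEnd m (i + 1) ≤ t} ⊆ (Finset.range N : Set ℕ) := by
      rintro i ⟨-, hi⟩
      have := (leftEnd_strictMono hm).lt_iff_lt.1 (hi.trans_lt hN)
      simp only [Finset.coe_range, Set.mem_Iio]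
      omega
    have := Set.ncard_le_ncard hsub (Finset.finite_toSet _)
    rw [Set.ncard_coe_finset, Finset.card_range] at this
    exact_mod_cast this
  have hpow := tendsto_rpow_zero_right ha
  have h0 : Tendsto (fun h : ℝ => Real.Gamma (1 - a) * h ^ a) (𝓝[>] 0) (𝓝 0) := by
    simpa using hpow.const_mul (Real.Gamma (1 - a))
  refine h0.zero_mul_isBoundedUnder_le ⟨N, ?_⟩
  refine Filter.eventually_map.2 (Filter.Eventually.of_forall fun h => ?_)
  simpa using hbd h

end Seq

/-! ### Short partitions of large total diversity -/

/-- The masses `(D / (i + 1)) ^ (1 / a)`; exactly those with `i + 1 < D / h ^ a` exceed `h`. -/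
noncomputable def powMass (a D : ℝ) (i : ℕ) : ℝ := (D / (i + 1)) ^ (1 / a)

lemma powMass_pos {a D : ℝ} (hD : 0 < D) (i : ℕ) : 0 < powMass a D i :=
  Real.rpow_pos_of_pos (by positivity) _

lemma summable_powMass {a D : ℝ} (ha : 0 < a) (ha' : a < 1) (hD : 0 < D) :
    Summable (powMass a D) := by
  have h1 : Summable fun n : ℕ => 1 / (n : ℝ) ^ (1 / a) :=
    Real.summable_one_div_nat_rpow.2 ((one_lt_div ha).2 ha')
  have h2 := ((summable_nat_add_iff 1).2 h1).mul_left (D ^ (1 / a))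
  refine h2.congr fun i => ?_
  rw [powMass, Real.div_rpow hD.le (by positivity)]
  push_cast
  ring

lemma lt_powMass_iff {a D h : ℝ} (ha : 0 < a) (hD : 0 < D) (hh : 0 < h) (i : ℕ) :
    h < powMass a D i ↔ (i : ℝ) + 1 < D / h ^ a := by
  have hi : (0 : ℝ) < (i : ℝ) + 1 := by positivity
  have hp : 0 < h ^ a := Real.rpow_pos_of_pos hh a
  rw [powMass, one_div, Real.lt_rpow_inv_iff_of_pos hh.le (by positivity) ha, lt_div_iff₀ hi,
    lt_div_iff₀ hp, mul_comm]

/-- The `K`-th tail of `powMass a D` gives total diversity `Γ(1 - a) D`: the number of its masses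
above `h` differs from `D / h ^ a` by at most `K + 1`. -/
lemma hasDiversity_powMass {a D : ℝ} (ha : 0 < a) (hD : 0 < D) (K : ℕ)
    (hs : Summable fun i => powMass a D (i + K)) :
    HasDiversity a (ofSeq (fun i => powMass a D (i + K)) (fun i => powMass_pos hD _) hs)
      (∑' i, powMass a D (i + K)) (Real.Gamma (1 - a) * D) := by
  have hcount : ∀ h : ℝ, 0 < h →
      divCount (ofSeq (fun i => powMass a D (i + K)) (fun i => powMass_pos hD _) hs)
        (∑' i, powMass a D (i + K)) h = ⌈D / h ^ a⌉₊ - (K + 1) := by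
    intro h hh
    rw [divCount_ofSeq]
    have : {i : ℕ | h < powMass a D (i + K) ∧
        leftEnd (fun i => powMass a D (i + K)) (i + 1) ≤ ∑' i, powMass a D (i + K)} =
        (Finset.range (⌈D / h ^ a⌉₊ - (K + 1)) : Set ℕ) := by
      ext i
      have h1 := leftEnd_le (m := fun i => powMass a D (i + K)) (fun i => powMass_pos hD _) hs (i + 1)
      have h2 : (i : ℕ) + K + 1 < ⌈D / h ^ a⌉₊ ↔ h < powMass a D (i + K) := by
        rw [lt_powMass_iff ha hD hh, Nat.lt_ceil]
        push_cast
        rfl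
      simp only [Set.mem_ofPred_eq, Finset.coe_range, Set.mem_Iio, ← h2, h1, and_true]
      omega
    rw [this, Set.ncard_coe_finset, Finset.card_range]
  unfold HasDiversity
  have hpow := tendsto_rpow_zero_right ha
  have hlow : Tendsto (fun h : ℝ => D - h ^ a * (K + 1)) (𝓝[>] 0) (𝓝 D) := by
    simpa using (hpow.mul_const ((K : ℝ) + 1)).const_sub D
  have hup : Tendsto (fun h : ℝ => D + h ^ a * (K + 1)) (𝓝[>] 0) (𝓝 D) := by
    simpa using (hpow.mul_const ((K : ℝ) + 1)).const_add D
  simp only [mul_assoc]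
  refine Tendsto.const_mul _ (tendsto_of_tendsto_of_tendsto_of_le_of_le' hlow hup ?_ ?_)
  all_goals
    filter_upwards [self_mem_nhdsWithin] with h hh
    rw [hcount h hh]
    have hp : 0 < h ^ a := Real.rpow_pos_of_pos hh a
    have hX : h ^ a * (D / h ^ a) = D := by field_simp
    have h1 : D / h ^ a ≤ ⌈D / h ^ a⌉₊ := Nat.le_ceil _
    have h2 : (⌈D / h ^ a⌉₊ : ℝ) < D / h ^ a + 1 := Nat.ceil_lt_add_one (by positivity)
    have h3 : ((⌈D / h ^ a⌉₊ - (K + 1) : ℕ) : ℝ) ≤ ⌈D / h ^ a⌉₊ := by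
      exact_mod_cast Nat.sub_le _ _
    have h4 : (⌈D / h ^ a⌉₊ : ℝ) ≤ ((⌈D / h ^ a⌉₊ - (K + 1) : ℕ) : ℝ) + (K + 1) := by
      exact_mod_cast (by omega : ⌈D / h ^ a⌉₊ ≤ ⌈D / h ^ a⌉₊ - (K + 1) + (K + 1))
    have h5 : (0 : ℝ) ≤ K := Nat.cast_nonneg K
  · calc D - h ^ a * (K + 1) = h ^ a * (D / h ^ a - (K + 1)) := by rw [mul_sub, hX]
      _ ≤ _ := mul_le_mul_of_nonneg_left (by linarith) hp.le
  · calc _ ≤ h ^ a * (D / h ^ a + (K + 1)) := mul_le_mul_of_nonneg_left (by linarith) hp.le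
      _ = _ := by rw [mul_add, hX]

/-- There are arbitrarily short interval partitions with arbitrarily large total diversity. -/
lemma exists_short_diverse {a : ℝ} (ha : 0 < a) (ha' : a < 1) {ε : ℝ} (hε : 0 < ε) (M : ℝ) :
    ∃ γ : IntervalPartition, HasDiversityProp a γ ∧ γ.length < ε ∧ M < totalDiversity a γ := by
  have hG : 0 < Real.Gamma (1 - a) := Real.Gamma_pos_of_pos (by linarith)
  set D : ℝ := (|M| + 1) / Real.Gamma (1 - a) with hDdef
  have hD : 0 < D := by positivity
  obtain ⟨K, hK⟩ := ((tendsto_sum_nat_add (powMass a D)).eventually (gt_mem_nhds hε)).exists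
  have hs : Summable fun i => powMass a D (i + K) :=
    (summable_nat_add_iff K).2 (summable_powMass ha ha' hD)
  have hdiv := hasDiversity_powMass ha hD K hs
  refine ⟨ofSeq _ (fun i => powMass_pos hD _) hs, ?_, hK, ?_⟩
  · rintro t ⟨-, ht⟩
    rcases ht.eq_or_lt with e | e
    · rw [e]
      exact ⟨_, hdiv⟩
    · exact ⟨0, hasDiversity_ofSeq_of_lt ha _ hs e⟩
  · rw [totalDiversity_eq hdiv, hDdef, mul_div_cancel₀ _ hG.ne']
    linarith [le_abs_self M]

/-- Near the empty partition `d_H'` can be small while `d_α` is large. -/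
lemma exists_near_empty {a : ℝ} (ha : 0 < a) (ha' : a < 1) {ε : ℝ} (hε : 0 < ε) (M : ℝ) :
    ∃ γ : IntervalPartition, HasDiversityProp a γ ∧ dHp empty γ < ε ∧ M < dA a empty γ := by
  obtain ⟨γ, h1, h2, h3⟩ := exists_short_diverse ha ha' hε M
  refine ⟨γ, h1, (dHp_empty_le γ).trans_lt h2, ?_⟩
  have h4 := abs_totalDiversity_sub_le_dA a empty γ
  rw [totalDiversity_eq (hasDiversity_empty a _), zero_sub, abs_neg] at h4
  exact h3.trans_le ((le_abs_self _).trans h4)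

end IntervalPartition

open IntervalPartition in
/-- for every `ε > 0` there are `β, γ ∈ I_α` with `d_H(β,γ) < ε`
and `d_α(β,γ) > 1/ε`. Consequently the topology of `d_α` on `I_α` is strictly
stronger than the subspace topology of `d_H` (equivalently, of `d_H'`): the
identity from `(I_α, d_α)` to `(I_α, d_H)` and to `(I_α, d_H')` is continuous,
but neither inverse is. -/
theorem dA_strictly_stronger (a : ℝ) (ha : 0 < a) (ha' : a < 1) :
    (∀ ε : ℝ, 0 < ε → ∃ β γ : IntervalPartition,
      HasDiversityProp a β ∧ HasDiversityProp a γ ∧ dH β γ < ε ∧ 1 / ε < dA a β γ) ∧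
    (∀ β : IntervalPartition, HasDiversityProp a β → ∀ ε : ℝ, 0 < ε → ∃ δ : ℝ, 0 < δ ∧
      ∀ γ : IntervalPartition, HasDiversityProp a γ → dA a β γ < δ → dH β γ < ε) ∧
    (∀ β : IntervalPartition, HasDiversityProp a β → ∀ ε : ℝ, 0 < ε → ∃ δ : ℝ, 0 < δ ∧
      ∀ γ : IntervalPartition, HasDiversityProp a γ → dA a β γ < δ → dHp β γ < ε) ∧
    ¬ (∀ β : IntervalPartition, HasDiversityProp a β → ∀ ε : ℝ, 0 < ε → ∃ δ : ℝ, 0 < δ ∧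
      ∀ γ : IntervalPartition, HasDiversityProp a γ → dH β γ < δ → dA a β γ < ε) ∧
    ¬ (∀ β : IntervalPartition, HasDiversityProp a β → ∀ ε : ℝ, 0 < ε → ∃ δ : ℝ, 0 < δ ∧
      ∀ γ : IntervalPartition, HasDiversityProp a γ → dHp β γ < δ → dA a β γ < ε) := by
  have hempty : HasDiversityProp a empty := fun t _ => ⟨0, hasDiversity_empty a t⟩
  refine ⟨?_, ?_, ?_, ?_, ?_⟩
  · intro ε hε
    obtain ⟨γ, h1, h2, h3⟩ := exists_near_empty ha ha' hε (1 / ε)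
    exact ⟨empty, γ, hempty, h1, (dH_le_dHp _ _).trans_lt h2, h3⟩
  · intro β _ ε hε
    exact ⟨ε, hε, fun γ _ h => ((dH_le_dHp β γ).trans (dHp_le_dA a β γ)).trans_lt h⟩
  · intro β _ ε hε
    exact ⟨ε, hε, fun γ _ h => (dHp_le_dA a β γ).trans_lt h⟩
  · intro H
    obtain ⟨δ, hδ, h⟩ := H empty hempty 1 one_pos
    obtain ⟨γ, h1, h2, h3⟩ := exists_near_empty ha ha' hδ 1
    exact lt_asymm h3 (h γ h1 ((dH_le_dHp _ _).trans_lt h2))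
  · intro H
    obtain ⟨δ, hδ, h⟩ := H empty hempty 1 one_pos
    obtain ⟨γ, h1, h2, h3⟩ := exists_near_empty ha ha' hδ 1
    exact lt_asymm h3 (h γ h1 h2)
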